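/- (Links in the upper model.) Fix a simplex σ ∈ Δ_n with ∏_{τ⊇σ} q_τ < 1 and let Δ' be the simplex on the vertex set [n] \ σ. Let λ̄ be the probability measure on simplicial subcomplexes L ⊆ Δ' defined by λ̄(L) = P̄_n({Y : σ ∈ Y and Lk_Y(σ) = L}) / P̄_n({Y : σ ∈ Y}). Then λ̄ = c_σ · P̄' + (1 − c_σ) · λ_∅, where c_σ = (1 − ∏_{τ⊇σ} q_τ)^{−1}, P̄' is the upper measure on subcomplexes of Δ' with probability parameters p'_τ = p_{σ∪τ}, and λ_∅ is the point mass at the empty complex. That is, λ̄(L) = c_σ · P̄'(L) for every nonempty complex L ⊆ Δ', and λ̄(∅) = c_σ · P̄'(∅) + (1 − c_σ). -/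

import Mathlib

open Finset

/-- The full simplex `Δₙ`: all nonempty subsets of `[n] = {0,…,n}`. -/
def simplexAll (n : ℕ) : Finset (Finset (Fin (n+1))) :=
  Finset.univ.filter fun σ => σ.Nonempty

/-- The boundary `∂Δₙ`: all nonempty proper subsets of `[n]`. -/
def bdry (n : ℕ) : Finset (Finset (Fin (n+1))) :=
  Finset.univ.filter fun σ => σ.Nonempty ∧ σ ≠ Finset.univ

/-- A hypergraph is a simplicial complex if it is closed under passing to
nonempty subsets. -/
def IsComplex {n : ℕ} (X : Finset (Finset (Fin (n+1)))) : Prop :=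
  ∀ σ ∈ X, ∀ τ : Finset (Fin (n+1)), τ ⊆ σ → τ.Nonempty → τ ∈ X

instance {n : ℕ} (X : Finset (Finset (Fin (n+1)))) : Decidable (IsComplex X) :=
  inferInstanceAs (Decidable (∀ σ ∈ X, ∀ τ : Finset (Fin (n+1)), τ ⊆ σ → τ.Nonempty → τ ∈ X))

/-- The dual hypergraph `c(X) = {σ̂ : σ ∈ ∂Δₙ, σ ∉ X}`, where `σ̂ = [n] \ σ`. -/
def dual {n : ℕ} (X : Finset (Finset (Fin (n+1)))) : Finset (Finset (Fin (n+1))) :=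
  (bdry n \ X).image fun σ => σᶜ

/-- `X̄`: the smallest simplicial complex containing the hypergraph `X`. -/
def clUp {n : ℕ} (X : Finset (Finset (Fin (n+1)))) : Finset (Finset (Fin (n+1))) :=
  Finset.univ.filter fun τ => τ.Nonempty ∧ ∃ σ ∈ X, τ ⊆ σ

/-- `X̲`: the largest simplicial complex contained in the hypergraph `X`. -/
def clLow {n : ℕ} (X : Finset (Finset (Fin (n+1)))) : Finset (Finset (Fin (n+1))) :=
  Finset.univ.filter fun τ => τ.Nonempty ∧ ∀ σ : Finset (Fin (n+1)), σ ⊆ τ → σ.Nonempty → σ ∈ X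

/-- The Bernoulli measure with parameters `p` on hypergraphs contained in the
ambient set `S` of simplices: `P(X) = ∏_{σ∈X} p σ · ∏_{σ∈S\X} (1 - p σ)`. -/
def bern {n : ℕ} (S : Finset (Finset (Fin (n+1)))) (p : Finset (Fin (n+1)) → ℝ)
    (X : Finset (Finset (Fin (n+1)))) : ℝ :=
  (∏ σ ∈ X, p σ) * ∏ σ ∈ S \ X, (1 - p σ)

/-- The upper measure: `P̄(Y) = Σ_{X ⊆ S, X̄ = Y} P(X)`. -/
def upperP {n : ℕ} (S : Finset (Finset (Fin (n+1)))) (p : Finset (Fin (n+1)) → ℝ)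
    (Y : Finset (Finset (Fin (n+1)))) : ℝ :=
  ∑ X ∈ S.powerset.filter (fun X => clUp X = Y), bern S p X

/-- The lower measure: `P̲(Y) = Σ_{X ⊆ S, X̲ = Y} P(X)`. -/
def lowerP {n : ℕ} (S : Finset (Finset (Fin (n+1)))) (p : Finset (Fin (n+1)) → ℝ)
    (Y : Finset (Finset (Fin (n+1)))) : ℝ :=
  ∑ X ∈ S.powerset.filter (fun X => clLow X = Y), bern S p X

/-- External simplices of `Y` relative to the ambient set `S`: simplices
`σ ∈ S` with `σ ∉ Y` but every nonempty proper subset of `σ` in `Y`. -/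
def extSimp {n : ℕ} (S Y : Finset (Finset (Fin (n+1)))) : Finset (Finset (Fin (n+1))) :=
  S.filter fun σ => σ ∉ Y ∧ ∀ τ : Finset (Fin (n+1)), τ ⊂ σ → τ.Nonempty → τ ∈ Y

/-- Maximal simplices of `Y`: simplices of `Y` not properly contained in another
simplex of `Y`. -/
def maxSimp {n : ℕ} (Y : Finset (Finset (Fin (n+1)))) : Finset (Finset (Fin (n+1))) :=
  Y.filter fun σ => ∀ τ ∈ Y, σ ⊆ τ → σ = τ

/-- The simplex `Δ'` spanned by the vertices `[n] \ σ`. -/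
def delta' {n : ℕ} (σ : Finset (Fin (n+1))) : Finset (Finset (Fin (n+1))) :=
  (simplexAll n).filter fun τ => τ ⊆ σᶜ

/-- The link of `σ` in `Y`: all simplices `τ` disjoint from `σ` with
`σ ∪ τ ∈ Y`. -/
def linkOf {n : ℕ} (σ : Finset (Fin (n+1))) (Y : Finset (Finset (Fin (n+1)))) :
    Finset (Finset (Fin (n+1))) :=
  (simplexAll n).filter fun τ => τ ⊆ σᶜ ∧ σ ∪ τ ∈ Y

/-- The conditional distribution of the link `Lk_Y(σ)` given `σ ∈ Y`, in the
upper model on `Δₙ` with parameters `p`. -/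
noncomputable def lamUp {n : ℕ} (p : Finset (Fin (n+1)) → ℝ)
    (σ : Finset (Fin (n+1))) (L : Finset (Finset (Fin (n+1)))) : ℝ :=
  (∑ Y ∈ (simplexAll n).powerset.filter
      (fun Y => IsComplex Y ∧ σ ∈ Y ∧ linkOf σ Y = L),
      upperP (simplexAll n) p Y) /
  (∑ Y ∈ (simplexAll n).powerset.filter (fun Y => IsComplex Y ∧ σ ∈ Y),
      upperP (simplexAll n) p Y)

/-! The upper model on `Δₙ` is the closure `X̄` of a random hypergraph `X`. Taking links commutes
with closure, so `Lk_{X̄}(σ)` is the closure of the hypergraph `{τ ∈ Δ' : σ ∪ τ ∈ X}`. As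
`τ ↦ σ ∪ τ` is injective on `Δ'`, this hypergraph is Bernoulli with parameters `p_{σ∪τ}`, and hence
`Lk_{X̄}(σ)` has law `P̄'` before conditioning. Conditioning on `σ ∈ X̄` removes the event that `X`
misses every simplex containing `σ`; it has probability `∏_{τ⊇σ} q_τ`, and on it the link is
empty. -/

section BernoulliProb

variable {ι κ R : Type*} [DecidableEq ι] [DecidableEq κ] [CommRing R]

/-- The probability of the event `A` for the random subset of `S` that contains each `i ∈ S`
independently with probability `p i`. Probabilities take values in a commutative ring `R`, so this
is the total Bernoulli weight of `A`, not constrained to lie in `[0,1]`. -/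
def bernoulliProb (S : Finset ι) (p : ι → R) (A : Finset ι → Prop) [DecidablePred A] : R :=
  ∑ X ∈ S.powerset with A X, (∏ i ∈ X, p i) * ∏ i ∈ S \ X, (1 - p i)

lemma bernoulliProb_congr {S : Finset ι} {p : ι → R} {A B : Finset ι → Prop} [DecidablePred A]
    [DecidablePred B] (h : ∀ X ⊆ S, (A X ↔ B X)) : bernoulliProb S p A = bernoulliProb S p B :=
  sum_congr (filter_congr fun X hX => h X (mem_powerset.1 hX)) fun _ _ => rfl

lemma bernoulliProb_and_add_and_not (S : Finset ι) (p : ι → R) (A B : Finset ι → Prop)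
    [DecidablePred A] [DecidablePred B] :
    bernoulliProb S p (fun X => A X ∧ B X) + bernoulliProb S p (fun X => A X ∧ ¬B X) =
      bernoulliProb S p A := by
  simp only [bernoulliProb, ← filter_filter]
  exact sum_filter_add_sum_filter_not _ _ _

lemma bernoulliProb_add_not (S : Finset ι) (p : ι → R) (A : Finset ι → Prop) [DecidablePred A] :
    bernoulliProb S p A + bernoulliProb S p (fun X => ¬A X) = 1 := by
  rw [bernoulliProb, bernoulliProb, sum_filter_add_sum_filter_not, ← prod_add]
  simp only [add_sub_cancel, prod_const_one]

lemma bernoulliProb_eq_empty (S : Finset ι) (p : ι → R) :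
    bernoulliProb S p (fun X => X = ∅) = ∏ i ∈ S, (1 - p i) := by
  simp [bernoulliProb, sum_filter]

lemma bernoulliProb_insert {S : Finset ι} {a : ι} (ha : a ∉ S) (p : ι → R)
    (A : Finset ι → Prop) [DecidablePred A] :
    bernoulliProb (insert a S) p A =
      p a * bernoulliProb S p (fun X => A (insert a X)) + (1 - p a) * bernoulliProb S p A := by
  have haX {X : Finset ι} (hX : X ∈ S.powerset) : a ∉ X := fun h => ha (mem_powerset.1 hX h)
  simp only [bernoulliProb, sum_filter, sum_powerset_insert ha, mul_sum, mul_ite, mul_zero]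
  rw [add_comm]
  congr 1 <;> refine sum_congr rfl fun X hX => ?_
  · rw [insert_sdiff_insert, sdiff_insert_of_notMem ha, prod_insert (haX hX), mul_assoc]
  · rw [insert_sdiff_of_notMem _ (haX hX), prod_insert fun h => ha (mem_sdiff.1 h).1,
      mul_left_comm]

lemma bernoulliProb_inter {S T : Finset ι} (hT : T ⊆ S) (p : ι → R) (A : Finset ι → Prop)
    [DecidablePred A] : bernoulliProb S p (fun X => A (X ∩ T)) = bernoulliProb T p A := by
  obtain ⟨U, hTU, rfl⟩ : ∃ U, Disjoint T U ∧ T ∪ U = S :=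
    ⟨S \ T, disjoint_sdiff, union_sdiff_of_subset hT⟩
  clear hT
  induction U using Finset.induction_on with
  | empty =>
    rw [union_empty]
    exact bernoulliProb_congr fun X hX => by rw [inter_eq_left.2 hX]
  | insert a U ha ih =>
    obtain ⟨haT, hTU⟩ := disjoint_insert_right.1 hTU
    rw [union_insert, bernoulliProb_insert (by simp [ha, haT])]
    simp only [insert_inter_of_notMem haT, ih hTU]
    ring

lemma bernoulliProb_image {D : Finset κ} {e : κ → ι} (he : Set.InjOn e D) (p : ι → R)
    (A : Finset ι → Prop) [DecidablePred A] :
    bernoulliProb (D.image e) p A = bernoulliProb D (p ∘ e) (fun X => A (X.image e)) := by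
  induction D using Finset.induction_on generalizing A with
  | empty => by_cases h : A ∅ <;> simp [bernoulliProb, sum_filter, h]
  | insert a D ha ih =>
    rw [coe_insert, Set.injOn_insert (mem_coe.not.2 ha)] at he
    have hea : e a ∉ D.image e := by simpa using he.2
    simp only [image_insert, bernoulliProb_insert ha, bernoulliProb_insert hea, ih he.1,
      Function.comp_apply]

lemma bernoulliProb_preimage {S : Finset ι} {D : Finset κ} {e : κ → ι} (he : Set.InjOn e D)
    (hS : Set.MapsTo e D S) (p : ι → R) (A : Finset κ → Prop) [DecidablePred A] :
    bernoulliProb S p (fun X => A {d ∈ D | e d ∈ X}) = bernoulliProb D (p ∘ e) A := by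
  calc bernoulliProb S p (fun X => A {d ∈ D | e d ∈ X})
      = bernoulliProb S p (fun X => A {d ∈ D | e d ∈ X ∩ D.image e}) := by
        refine bernoulliProb_congr fun X _ => ?_
        have : {d ∈ D | e d ∈ X ∩ D.image e} = {d ∈ D | e d ∈ X} :=
          filter_congr fun d hd => by rw [mem_inter, and_iff_left (mem_image_of_mem e hd)]
        rw [this]
    _ = bernoulliProb (D.image e) p (fun X => A {d ∈ D | e d ∈ X}) :=
        bernoulliProb_inter (image_subset_iff.2 hS) p fun X => A {d ∈ D | e d ∈ X}
    _ = bernoulliProb D (p ∘ e) (fun X => A {d ∈ D | e d ∈ X.image e}) :=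
        bernoulliProb_image he p _
    _ = bernoulliProb D (p ∘ e) A := by
        refine bernoulliProb_congr fun X hX => ?_
        have : {d ∈ D | e d ∈ X.image e} = X := by
          ext d
          rw [mem_filter, ← mem_coe (s := X.image e), coe_image]
          exact ⟨fun h => (he.mem_image_iff hX h.1).1 h.2,
            fun h => ⟨hX h, Set.mem_image_of_mem e h⟩⟩
        rw [this]

end BernoulliProb

section Complexes

variable {n : ℕ} {σ τ : Finset (Fin (n + 1))} {S X Y : Finset (Finset (Fin (n + 1)))}

/-- The open star of `σ` in `Δₙ`: the simplices of which `σ` is a face. -/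
def openStar (σ : Finset (Fin (n + 1))) : Finset (Finset (Fin (n + 1))) :=
  (simplexAll n).filter fun τ => σ ⊆ τ

lemma mem_simplexAll : τ ∈ simplexAll n ↔ τ.Nonempty := by
  simp [simplexAll]

lemma mem_clUp : τ ∈ clUp X ↔ τ.Nonempty ∧ ∃ ρ ∈ X, τ ⊆ ρ := by
  simp [clUp]

lemma mem_delta' : τ ∈ delta' σ ↔ τ.Nonempty ∧ Disjoint σ τ := by
  simp [delta', mem_simplexAll, subset_compl_iff_disjoint_left]

lemma linkOf_eq_filter_delta' (σ : Finset (Fin (n + 1))) (Y : Finset (Finset (Fin (n + 1)))) :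
    linkOf σ Y = {τ ∈ delta' σ | σ ∪ τ ∈ Y} := by
  rw [linkOf, delta', filter_filter]

lemma mem_linkOf : τ ∈ linkOf σ Y ↔ τ.Nonempty ∧ Disjoint σ τ ∧ σ ∪ τ ∈ Y := by
  rw [linkOf_eq_filter_delta', mem_filter, mem_delta', and_assoc]

lemma isComplex_simplexAll : IsComplex (simplexAll n) :=
  fun _ _ _ _ h => mem_simplexAll.2 h

lemma isComplex_clUp (X : Finset (Finset (Fin (n + 1)))) : IsComplex (clUp X) := by
  intro ρ hρ τ hτρ hτ
  obtain ⟨-, υ, hυ, hρυ⟩ := mem_clUp.1 hρ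
  exact mem_clUp.2 ⟨hτ, υ, hυ, hτρ.trans hρυ⟩

lemma clUp_subset (hS : IsComplex S) (hX : X ⊆ S) : clUp X ⊆ S := by
  intro τ hτ
  obtain ⟨hne, ρ, hρ, hτρ⟩ := mem_clUp.1 hτ
  exact hS ρ (hX hρ) τ hτρ hne

lemma linkOf_clUp (σ : Finset (Fin (n + 1))) (X : Finset (Finset (Fin (n + 1)))) :
    linkOf σ (clUp X) = clUp (linkOf σ X) := by
  ext τ
  simp only [mem_linkOf, mem_clUp]
  constructor
  · rintro ⟨hτ, hdisj, -, ρ, hρ, hle⟩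
    obtain ⟨hσρ, hτρ⟩ := union_subset_iff.1 hle
    have hτ' : τ ⊆ ρ \ σ := subset_sdiff.2 ⟨hτρ, hdisj.symm⟩
    exact ⟨hτ, ρ \ σ, ⟨hτ.mono hτ', disjoint_sdiff, by rwa [union_sdiff_of_subset hσρ]⟩, hτ'⟩
  · rintro ⟨hτ, ρ, ⟨-, hdisj, hρ⟩, hτρ⟩
    exact ⟨hτ, hdisj.mono_right hτρ, hτ.mono subset_union_right, σ ∪ ρ, hρ,
      union_subset_union_right hτρ⟩

lemma linkOf_eq_empty_of_notMem (hY : IsComplex Y) (hσ : σ.Nonempty) (hσY : σ ∉ Y) :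
    linkOf σ Y = ∅ :=
  eq_empty_of_forall_notMem fun _ hτ =>
    hσY (hY _ (mem_linkOf.1 hτ).2.2 σ subset_union_left hσ)

lemma notMem_clUp_iff (hσ : σ.Nonempty) : σ ∉ clUp X ↔ X ∩ openStar σ = ∅ := by
  simp only [mem_clUp, hσ, true_and, openStar, eq_empty_iff_forall_notMem, mem_inter, mem_filter,
    mem_simplexAll, not_exists, not_and]
  exact forall₂_congr fun ρ _ => ⟨fun h _ => h, fun h hσρ => h (hσ.mono hσρ) hσρ⟩

lemma injOn_union_delta' (σ : Finset (Fin (n + 1))) :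
    Set.InjOn (σ ∪ ·) (delta' σ : Set (Finset (Fin (n + 1)))) := by
  intro τ hτ τ' hτ' h
  have hdisj := (mem_delta'.1 hτ).2
  have hdisj' := (mem_delta'.1 hτ').2
  rw [← union_sdiff_cancel_left hdisj, ← union_sdiff_cancel_left hdisj']
  exact congrArg (· \ σ) h

end Complexes

section UpperModel

variable {n : ℕ} {σ : Finset (Fin (n + 1))} {S : Finset (Finset (Fin (n + 1)))}

lemma upperP_eq_bernoulliProb (S : Finset (Finset (Fin (n + 1)))) (p : Finset (Fin (n + 1)) → ℝ)
    (Y : Finset (Finset (Fin (n + 1)))) : upperP S p Y = bernoulliProb S p (fun X => clUp X = Y) :=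
  rfl

lemma sum_upperP (hS : IsComplex S) (p : Finset (Fin (n + 1)) → ℝ)
    (A : Finset (Finset (Fin (n + 1))) → Prop) [DecidablePred A] :
    ∑ Y ∈ S.powerset with A Y, upperP S p Y = bernoulliProb S p (fun X => A (clUp X)) := by
  have hmaps : ∀ X ∈ S.powerset.filter (fun X => A (clUp X)), clUp X ∈ S.powerset.filter A := by
    simp only [mem_filter, mem_powerset]
    exact fun X hX => ⟨clUp_subset hS hX.1, hX.2⟩
  rw [bernoulliProb, ← sum_fiberwise_of_maps_to hmaps]
  refine sum_congr rfl fun Y hY => ?_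
  have hAY : A Y := (mem_filter.1 hY).2
  rw [filter_filter, upperP_eq_bernoulliProb]
  exact bernoulliProb_congr fun X _ => (and_iff_right_of_imp fun h => h.symm ▸ hAY).symm

lemma bernoulliProb_notMem_clUp (p : Finset (Fin (n + 1)) → ℝ) (hσ : σ.Nonempty) :
    bernoulliProb (simplexAll n) p (fun X => σ ∉ clUp X) = ∏ τ ∈ openStar σ, (1 - p τ) := by
  simp only [notMem_clUp_iff hσ]
  have hstar : openStar σ ⊆ simplexAll n := filter_subset _ _
  rw [bernoulliProb_inter hstar p (· = ∅), bernoulliProb_eq_empty]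

lemma bernoulliProb_linkOf_clUp_eq (p : Finset (Fin (n + 1)) → ℝ) (σ : Finset (Fin (n + 1)))
    (L : Finset (Finset (Fin (n + 1)))) :
    bernoulliProb (simplexAll n) p (fun X => linkOf σ (clUp X) = L) =
      upperP (delta' σ) (fun τ => p (σ ∪ τ)) L := by
  have hmaps : Set.MapsTo (σ ∪ ·) (delta' σ : Set (Finset (Fin (n + 1)))) (simplexAll n) :=
    fun τ hτ => mem_simplexAll.2 ((mem_delta'.1 hτ).1.mono subset_union_right)
  simp_rw [linkOf_clUp, linkOf_eq_filter_delta', upperP_eq_bernoulliProb]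
  exact bernoulliProb_preimage (injOn_union_delta' σ) hmaps p fun X => clUp X = L

lemma bernoulliProb_linkOf_clUp_eq_and_notMem (p : Finset (Fin (n + 1)) → ℝ) (hσ : σ.Nonempty)
    (L : Finset (Finset (Fin (n + 1)))) :
    bernoulliProb (simplexAll n) p (fun X => linkOf σ (clUp X) = L ∧ σ ∉ clUp X) =
      if L = ∅ then ∏ τ ∈ openStar σ, (1 - p τ) else 0 := by
  have hlink (X) (h : σ ∉ clUp X) : linkOf σ (clUp X) = ∅ :=
    linkOf_eq_empty_of_notMem (isComplex_clUp X) hσ h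
  split_ifs with hL
  · rw [← bernoulliProb_notMem_clUp p hσ]
    exact bernoulliProb_congr fun X _ => and_iff_right_of_imp fun h => (hlink X h).trans hL.symm
  · refine sum_eq_zero fun X hX => ?_
    obtain ⟨-, hXL, hσX⟩ := mem_filter.1 hX
    exact absurd (hXL.symm.trans (hlink X hσX)) hL

lemma lamUp_eq_div (p : Finset (Fin (n + 1)) → ℝ) (hσ : σ.Nonempty)
    (L : Finset (Finset (Fin (n + 1)))) :
    lamUp p σ L =
      (upperP (delta' σ) (fun τ => p (σ ∪ τ)) L -
          if L = ∅ then ∏ τ ∈ openStar σ, (1 - p τ) else 0) /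
        (1 - ∏ τ ∈ openStar σ, (1 - p τ)) := by
  rw [lamUp, sum_upperP isComplex_simplexAll, sum_upperP isComplex_simplexAll,
    ← bernoulliProb_linkOf_clUp_eq, ← bernoulliProb_linkOf_clUp_eq_and_notMem p hσ,
    ← bernoulliProb_notMem_clUp p hσ]
  simp only [isComplex_clUp, true_and]
  congr 1
  · simp only [and_comm (a := σ ∈ _)]
    exact eq_sub_of_add_eq (bernoulliProb_and_add_and_not _ _ _ _)
  · exact eq_sub_of_add_eq (bernoulliProb_add_not _ _ _)

theorem link_upper_general (p : Finset (Fin (n + 1)) → ℝ) (hσ : σ.Nonempty)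
    (hq : ∏ τ ∈ openStar σ, (1 - p τ) ≠ 1) (L : Finset (Finset (Fin (n + 1)))) :
    lamUp p σ L =
      (1 - ∏ τ ∈ openStar σ, (1 - p τ))⁻¹ * upperP (delta' σ) (fun τ => p (σ ∪ τ)) L +
        (1 - (1 - ∏ τ ∈ openStar σ, (1 - p τ))⁻¹) * if L = ∅ then 1 else 0 := by
  have hc : 1 - ∏ τ ∈ openStar σ, (1 - p τ) ≠ 0 := sub_ne_zero.2 hq.symm
  rw [lamUp_eq_div p hσ]
  split_ifs
  · field_simp
    ring
  · ring

end UpperModel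

/-- Links in the upper model: the conditional distribution of `Lk_Y(σ)` given
`σ ∈ Y` equals `c_σ · P̄' + (1 - c_σ) · λ_∅`, where `P̄'` is the upper measure
on subcomplexes of `Δ'` with parameters `p'_τ = p_{σ∪τ}` and
`c_σ = (1 - ∏_{τ⊇σ} q_τ)⁻¹`. -/
theorem link_upper (n : ℕ) (hn : 1 ≤ n) (p : Finset (Fin (n+1)) → ℝ)
    (hp : ∀ τ ∈ simplexAll n, 0 ≤ p τ ∧ p τ ≤ 1)
    (σ : Finset (Fin (n+1))) (hσ : σ ∈ simplexAll n)
    (hq : ∏ τ ∈ (simplexAll n).filter (fun τ => σ ⊆ τ), (1 - p τ) < 1) :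
    (∀ L ∈ (delta' σ).powerset.filter (fun L => IsComplex L), L ≠ ∅ →
      lamUp p σ L
        = (1 - ∏ τ ∈ (simplexAll n).filter (fun τ => σ ⊆ τ), (1 - p τ))⁻¹ *
            upperP (delta' σ) (fun τ => p (σ ∪ τ)) L) ∧
    lamUp p σ (∅ : Finset (Finset (Fin (n+1))))
      = (1 - ∏ τ ∈ (simplexAll n).filter (fun τ => σ ⊆ τ), (1 - p τ))⁻¹ *
          upperP (delta' σ) (fun τ => p (σ ∪ τ)) ∅ +
        (1 - (1 - ∏ τ ∈ (simplexAll n).filter (fun τ => σ ⊆ τ), (1 - p τ))⁻¹) := by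
  have key := link_upper_general p (mem_simplexAll.1 hσ) hq.ne
  exact ⟨fun L _ hL => by simpa [hL, openStar] using key L, by simpa [openStar] using key ∅⟩
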